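/- arXiv:1407.5443 — 3 statements merged into one kernel-verified Lean document; each statement's English description precedes it below -/
import Mathlib

section
/- Fix integers n ≥ 3 and u ≥ 1 and the cones σᵢ (1 ≤ i ≤ n) and σ_{ij} (1 ≤ i < j ≤ n) of the fan Δ_u. Then: each of these n + n(n−1)/2 cones is an n-dimensional strictly convex rational polyhedral cone; the intersection of any two distinct of these cones is a common face of both; consequently these cones together with all their faces form a fan Δ_u in ℝⁿ; and this fan is complete, i.e. the union of its cones is all of ℝⁿ. -/
/-!
Write a vector as `x = t e + ∑ a_k f_k`; since `∑ f_k = 0`, the coefficients `a_k` are determined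
up to a common additive constant. Put `uᵢ = 1` for `i < n` and `uₙ = u`, so that `gᵢ = uᵢ h - fᵢ`
for every `i`. If `a_i ≤ a_j` are the two smallest coefficients of `x`, let
`φ(x) = t + uᵢ (a_j - a_i)`; this is well defined, because the second term vanishes when the
smallest coefficient is attained twice. Then `σᵢ` is the set of `x` with `a_i` minimal and
`φ(x) ≥ 0`, and `σ_{ij}` is the set of `x` whose two smallest coefficients are `a_i, a_j` and for
which `φ(x) ≤ 0`. The lemmas `mem_sigmaI` and `mem_sigmaIJ` say this as systems of linear
inequalities: one inclusion is checked on generators, the other comes from fixing the additive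
constant suitably.

Completeness and strict convexity can be read off from the inequalities. For each pair of maximal
cones there is an explicit hyperplane separating them and meeting each of them exactly in their
intersection (`meetInFace_of_sep`), so that they meet in a common face (`meet_maxCones`). Passing
from the maximal cones to the fan is then the general fact `isFan_of_meetInFace`, which rests on
the transitivity of the face relation for finitely generated cones (`IsFaceOf.trans`).
-/

open Pointwise

/-- Ambient space `ℝⁿ`. -/
abbrev V (n : ℕ) := Fin n → ℝ

/-- The polyhedral cone generated by a finite set of vectors:
all nonnegative linear combinations. -/
def coneOf {n : ℕ} (s : Finset (V n)) : Set (V n) :=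
  {x | ∃ c : V n → ℝ, (∀ v, 0 ≤ c v) ∧ x = ∑ v ∈ s, c v • v}

/-- A polyhedral cone: the cone generated by finitely many vectors. -/
def IsPolyhedralCone {n : ℕ} (σ : Set (V n)) : Prop :=
  ∃ s : Finset (V n), σ = coneOf s

/-- A cone is strictly convex if `σ ∩ (−σ) = {0}`. -/
def IsStrictlyConvexCone {n : ℕ} (σ : Set (V n)) : Prop :=
  σ ∩ (-σ) = {0}

/-- `τ` is a face of `σ`: cut out on `σ` by a linear functional nonnegative on `σ`. -/
def IsFaceOf {n : ℕ} (τ σ : Set (V n)) : Prop :=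
  ∃ m : V n →ₗ[ℝ] ℝ, (∀ x ∈ σ, 0 ≤ m x) ∧ τ = {x ∈ σ | m x = 0}

/-- The dimension of a cone: the dimension of its linear span. -/
noncomputable def dimCone {n : ℕ} (σ : Set (V n)) : ℕ :=
  Module.finrank ℝ (Submodule.span ℝ σ)

/-- The ray `ℝ_{≥0}·x`. -/
def rayGen {n : ℕ} (x : V n) : Set (V n) :=
  {y | ∃ c : ℝ, 0 ≤ c ∧ y = c • x}

/-- The set `σ(1)` of rays (one-dimensional faces) of `σ`. -/
def raysOf {n : ℕ} (σ : Set (V n)) : Set (Set (V n)) :=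
  {ρ | IsFaceOf ρ σ ∧ dimCone ρ = 1}

/-- `η` is a facet of `σ`: a face of dimension `dim σ − 1`. -/
def IsFacetOf {n : ℕ} (η σ : Set (V n)) : Prop :=
  IsFaceOf η σ ∧ dimCone η = dimCone σ - 1

/-- The cone hull of an arbitrary set: all nonnegative combinations of
finitely many of its elements. -/
def coneHull {n : ℕ} (s : Set (V n)) : Set (V n) :=
  {x | ∃ t : Finset (V n), ↑t ⊆ s ∧
    ∃ c : V n → ℝ, (∀ v, 0 ≤ c v) ∧ x = ∑ v ∈ t, c v • v}

/-- `σ'`: the cone generated by the union of the rays of `σ` other than `ρ`. -/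
def primeCone {n : ℕ} (σ ρ : Set (V n)) : Set (V n) :=
  coneHull (⋃ ρ' ∈ raysOf σ \ {ρ}, ρ')

/-- `x` is beneath the supporting hyperplane `H_η` of the facet `η` of `κ`:
every witnessing functional is positive at `x`. -/
def Beneath {n : ℕ} (κ η : Set (V n)) (x : V n) : Prop :=
  ∀ m : V n →ₗ[ℝ] ℝ, (∀ y ∈ κ, 0 ≤ m y) → η = {y ∈ κ | m y = 0} → 0 < m x

/-- `x` is beyond the supporting hyperplane `H_η` of the facet `η` of `κ`:
every witnessing functional is negative at `x`. -/
def Beyond {n : ℕ} (κ η : Set (V n)) (x : V n) : Prop :=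
  ∀ m : V n →ₗ[ℝ] ℝ, (∀ y ∈ κ, 0 ≤ m y) → η = {y ∈ κ | m y = 0} → m x < 0

/-- `σ` (an `n`-dimensional cone in `ℝⁿ`) is a pyramidal extension of `σ'` by the
ray `ρ`, where `σ'` is the cone generated by the rays of `σ` other than `ρ`:
either `dim σ' = n − 1`, or `dim σ' = n` and there is precisely one facet `η` of
`σ'` such that the nonzero points of `ρ` are beyond `H_η`, while they are beneath
`H_{η'}` for every other facet `η'` of `σ'`. -/
def IsPyramidalExtensionBy {n : ℕ} (σ ρ : Set (V n)) : Prop :=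
  dimCone (primeCone σ ρ) = n - 1 ∨
  (dimCone (primeCone σ ρ) = n ∧
    ∃ η, IsFacetOf η (primeCone σ ρ) ∧
      (∀ x ∈ ρ, x ≠ 0 → Beyond (primeCone σ ρ) η x) ∧
      (∀ η', IsFacetOf η' (primeCone σ ρ) → η' ≠ η →
        ∀ x ∈ ρ, x ≠ 0 → Beneath (primeCone σ ρ) η' x))

/-- A fan in `ℝⁿ`: a finite collection of strictly convex polyhedral cones closed
under taking faces, in which any two cones intersect in a common face. -/
def IsFan {n : ℕ} (Δ : Set (Set (V n))) : Prop :=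
  Δ.Finite ∧
  (∀ σ ∈ Δ, IsPolyhedralCone σ ∧ IsStrictlyConvexCone σ) ∧
  (∀ σ ∈ Δ, ∀ τ, IsFaceOf τ σ → τ ∈ Δ) ∧
  (∀ σ ∈ Δ, ∀ τ ∈ Δ, IsFaceOf (σ ∩ τ) σ ∧ IsFaceOf (σ ∩ τ) τ)

/-- The real vector associated to an integral vector. -/
def castZ {n : ℕ} (l : Fin n → ℤ) : V n := fun i => (l i : ℝ)

/-- A rational polyhedral cone: generated by finitely many integral vectors. -/
def IsRationalPolyhedralCone {n : ℕ} (σ : Set (V n)) : Prop :=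
  ∃ s : Finset (Fin n → ℤ), σ = coneOf (s.image castZ)

/-! The vectors `e, f_i, h, g_i` and the cones `σ_i`, `σ_{ij}` of the fan `Δ_u`
(Section 6 of the paper), for `n ≥ 3` and an integer parameter `u`.  Indices
`1, …, n` of the paper correspond to `0, …, n − 1 : Fin n`, the last index
`n` of the paper being `n − 1`. -/

/-- `e = eₙ`. -/
def eVec (n : ℕ) : V n := fun j => if (j : ℕ) = n - 1 then 1 else 0

/-- `fᵢ = eᵢ` for `i < n`, and `fₙ = −(e₁ + ⋯ + e_{n−1})`. -/
def fVec (n : ℕ) (i : Fin n) : V n :=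
  if (i : ℕ) < n - 1 then Pi.single i 1
  else fun j => if (j : ℕ) = n - 1 then 0 else -1

/-- `h = −e`. -/
def hVec (n : ℕ) : V n := -eVec n

/-- `gᵢ = h − fᵢ` for `i < n`, and `gₙ = u·h − fₙ`. -/
def gVec (n : ℕ) (u : ℤ) (i : Fin n) : V n :=
  if (i : ℕ) < n - 1 then hVec n - fVec n i
  else (u : ℝ) • hVec n - fVec n i

/-- The generators `{e, gᵢ} ∪ {f_k : k ≠ i}` of `σᵢ`. -/
noncomputable def genI (n : ℕ) (u : ℤ) (i : Fin n) : Finset (V n) :=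
  insert (eVec n) (insert (gVec n u i) ((Finset.univ.erase i).image (fVec n)))

/-- The generators `{h, gᵢ, g_j} ∪ {f_k : k ≠ i, j}` of `σ_{ij}`. -/
noncomputable def genIJ (n : ℕ) (u : ℤ) (i j : Fin n) : Finset (V n) :=
  insert (hVec n) (insert (gVec n u i) (insert (gVec n u j)
    (((Finset.univ.erase i).erase j).image (fVec n))))

/-- The cone `σᵢ`. -/
noncomputable def sigmaI (n : ℕ) (u : ℤ) (i : Fin n) : Set (V n) :=
  coneOf (genI n u i)

/-- The cone `σ_{ij}` (symmetric in `i`, `j`). -/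
noncomputable def sigmaIJ (n : ℕ) (u : ℤ) (i j : Fin n) : Set (V n) :=
  coneOf (genIJ n u i j)

/-- The maximal cones `σᵢ (1 ≤ i ≤ n)` and `σ_{ij} (i ≠ j)` of `Δ_u`. -/
def maxCones (n : ℕ) (u : ℤ) : Set (Set (V n)) :=
  {C | ∃ i, C = sigmaI n u i} ∪ {C | ∃ i j, i ≠ j ∧ C = sigmaIJ n u i j}

/-- The fan `Δ_u`: the maximal cones together with all their faces. -/
def deltaU (n : ℕ) (u : ℤ) : Set (Set (V n)) :=
  {τ | ∃ C ∈ maxCones n u, IsFaceOf τ C}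

/-! ### Generalities on finitely generated cones and their faces -/

section Cones

variable {n : ℕ}

lemma coneOf_zero_mem (s : Finset (V n)) : (0 : V n) ∈ coneOf s :=
  ⟨fun _ => 0, fun _ => le_rfl, by simp⟩

lemma coneOf_add_mem {s : Finset (V n)} {x y : V n} (hx : x ∈ coneOf s) (hy : y ∈ coneOf s) :
    x + y ∈ coneOf s := by
  obtain ⟨c, hc, rfl⟩ := hx
  obtain ⟨d, hd, rfl⟩ := hy
  exact ⟨fun v => c v + d v, fun v => add_nonneg (hc v) (hd v), by
    simp [add_smul, Finset.sum_add_distrib]⟩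

lemma coneOf_smul_mem {s : Finset (V n)} {x : V n} {r : ℝ} (hr : 0 ≤ r) (hx : x ∈ coneOf s) :
    r • x ∈ coneOf s := by
  obtain ⟨c, hc, rfl⟩ := hx
  exact ⟨fun v => r * c v, fun v => mul_nonneg hr (hc v), by
    simp [Finset.smul_sum, mul_smul]⟩

lemma coneOf_sum_mem {ι : Type*} {s : Finset (V n)} {t : Finset ι} {f : ι → V n}
    (h : ∀ i ∈ t, f i ∈ coneOf s) : ∑ i ∈ t, f i ∈ coneOf s :=
  Finset.sum_induction f (· ∈ coneOf s) (fun _ _ => coneOf_add_mem) (coneOf_zero_mem s) h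

lemma mem_coneOf_of_mem {s : Finset (V n)} {v : V n} (hv : v ∈ s) : v ∈ coneOf s := by
  classical
  refine ⟨fun w => if w = v then 1 else 0, fun w => by dsimp only; split_ifs <;> simp, ?_⟩
  simp [ite_smul, hv]

lemma nonneg_on_coneOf {s : Finset (V n)} (m : V n →ₗ[ℝ] ℝ) (h : ∀ v ∈ s, 0 ≤ m v) :
    ∀ x ∈ coneOf s, 0 ≤ m x := by
  rintro x ⟨c, hc, rfl⟩
  simp only [map_sum, map_smul, smul_eq_mul]
  exact Finset.sum_nonneg fun v hv => mul_nonneg (hc v) (h v hv)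

/-- A face of a finitely generated cone is generated by the generators lying on it. -/
lemma face_eq_coneOf_filter {s : Finset (V n)} (m : V n →ₗ[ℝ] ℝ) (h : ∀ x ∈ coneOf s, 0 ≤ m x) :
    {x ∈ coneOf s | m x = 0} = coneOf (s.filter fun v => m v = 0) := by
  ext x
  constructor
  · rintro ⟨⟨c, hc, rfl⟩, hx⟩
    refine ⟨c, hc, ?_⟩
    simp only [map_sum, map_smul, smul_eq_mul] at hx
    rw [Finset.sum_eq_zero_iff_of_nonneg
      fun v hv => mul_nonneg (hc v) (h v (mem_coneOf_of_mem hv))] at hx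
    rw [Finset.sum_filter]
    refine Finset.sum_congr rfl fun v hv => ?_
    split_ifs with h0
    · rfl
    · rw [(mul_eq_zero.1 (hx v hv)).resolve_right h0, zero_smul]
  · rintro ⟨c, hc, rfl⟩
    refine ⟨coneOf_sum_mem fun v hv => coneOf_smul_mem (hc v)
      (mem_coneOf_of_mem (Finset.mem_filter.1 hv).1), ?_⟩
    simp only [map_sum, map_smul, smul_eq_mul]
    exact Finset.sum_eq_zero fun v hv => by simp [(Finset.mem_filter.1 hv).2]

lemma isFaceOf_refl (C : Set (V n)) : IsFaceOf C C := ⟨0, by simp, by simp⟩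

lemma IsFaceOf.subset {F C : Set (V n)} (h : IsFaceOf F C) : F ⊆ C := by
  obtain ⟨m, -, rfl⟩ := h
  exact fun x hx => hx.1

/-- A face of `C` contained in a smaller cone `D` is a face of `D`. -/
lemma IsFaceOf.restrict {F C D : Set (V n)} (h : IsFaceOf F C) (hFD : F ⊆ D) (hDC : D ⊆ C) :
    IsFaceOf F D := by
  obtain ⟨m, hm, rfl⟩ := h
  exact ⟨m, fun x hx => hm x (hDC hx), Set.Subset.antisymm
    (fun x hx => ⟨hFD hx, hx.2⟩) fun x hx => ⟨hDC hx.1, hx.2⟩⟩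

lemma IsFaceOf.inter {F G C : Set (V n)} (hF : IsFaceOf F C) (hG : IsFaceOf G C) :
    IsFaceOf (F ∩ G) C := by
  obtain ⟨m, hm, rfl⟩ := hF
  obtain ⟨m', hm', rfl⟩ := hG
  refine ⟨m + m', fun x hx => add_nonneg (hm x hx) (hm' x hx), ?_⟩
  ext x
  constructor
  · rintro ⟨⟨h1, h2⟩, -, h3⟩
    exact ⟨h1, by simp [h2, h3]⟩
  · rintro ⟨h1, h2⟩
    have h3 := hm x h1
    have h4 := hm' x h1
    rw [LinearMap.add_apply] at h2
    exact ⟨⟨h1, by linarith⟩, h1, by linarith⟩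

/-- Faces of faces are faces. If `m` cuts out `F` and `m'` cuts out `G` on `F`, then `N m + m'`
cuts out `G` on the whole cone for `N` large, because only finitely many generators lie off `F`. -/
lemma IsFaceOf.trans {s : Finset (V n)} {F G : Set (V n)} (hF : IsFaceOf F (coneOf s))
    (hG : IsFaceOf G F) : IsFaceOf G (coneOf s) := by
  obtain ⟨m, hm, rfl⟩ := hF
  obtain ⟨m', hm', rfl⟩ := hG
  have hms : ∀ v ∈ s, 0 ≤ m v := fun v hv => hm v (mem_coneOf_of_mem hv)
  set N : ℝ := 1 + ∑ v ∈ s, |m' v| / m v with hN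
  have key : ∀ v ∈ s, m v ≠ 0 → 0 < (N • m + m') v := by
    intro v hv h0
    have hpos : 0 < m v := lt_of_le_of_ne (hms v hv) (Ne.symm h0)
    have h1 : |m' v| / m v ≤ ∑ v ∈ s, |m' v| / m v :=
      Finset.single_le_sum (f := fun v => |m' v| / m v)
        (fun w hw => div_nonneg (abs_nonneg _) (hms w hw)) hv
    have h2 : |m' v| / m v < N := by linarith
    rw [div_lt_iff₀ hpos] at h2
    have h3 := neg_abs_le (m' v)
    simp only [LinearMap.add_apply, LinearMap.smul_apply, smul_eq_mul]
    linarith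
  have key0 : ∀ v ∈ s, 0 ≤ (N • m + m') v := by
    intro v hv
    by_cases h0 : m v = 0
    · simpa [h0] using hm' v ⟨mem_coneOf_of_mem hv, h0⟩
    · exact (key v hv h0).le
  have hnn := nonneg_on_coneOf (N • m + m') key0
  refine ⟨N • m + m', hnn, ?_⟩
  ext x
  constructor
  · rintro ⟨⟨h1, h2⟩, h3⟩
    exact ⟨h1, by simp [h2, h3]⟩
  · rintro ⟨h1, h2⟩
    have h4 : x ∈ coneOf (s.filter fun v => (N • m + m') v = 0) := by
      rw [← face_eq_coneOf_filter _ hnn]; exact ⟨h1, h2⟩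
    have h5 : m x = 0 := by
      obtain ⟨c, hc, rfl⟩ := h4
      simp only [map_sum, map_smul, smul_eq_mul]
      refine Finset.sum_eq_zero fun v hv => ?_
      rw [Finset.mem_filter] at hv
      by_contra hne
      exact (key v hv.1 (right_ne_zero_of_mul hne)).ne' hv.2
    refine ⟨⟨h1, h5⟩, ?_⟩
    simpa [h5] using h2

/-- Two cones meet in a common face. -/
def MeetInFace (C D : Set (V n)) : Prop := IsFaceOf (C ∩ D) C ∧ IsFaceOf (C ∩ D) D

lemma MeetInFace.symm {C D : Set (V n)} (h : MeetInFace C D) : MeetInFace D C := by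
  unfold MeetInFace
  rw [Set.inter_comm]
  exact ⟨h.2, h.1⟩

lemma meetInFace_self (C : Set (V n)) : MeetInFace C C := by
  simp [MeetInFace, isFaceOf_refl]

/-- Separation criterion: a hyperplane `m = 0` separating `C` from `D` and meeting each of the
two inside the other exhibits `C ∩ D` as a common face. -/
lemma meetInFace_of_sep {C D : Set (V n)} (m : V n →ₗ[ℝ] ℝ) (h1 : ∀ x ∈ C, 0 ≤ m x)
    (h2 : ∀ x ∈ D, m x ≤ 0) (h3 : ∀ x ∈ C, m x = 0 → x ∈ D) (h4 : ∀ x ∈ D, m x = 0 → x ∈ C) :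
    MeetInFace C D := by
  refine ⟨⟨m, h1, ?_⟩, ⟨-m, fun x hx => by simpa using h2 x hx, ?_⟩⟩
  · ext x
    exact ⟨fun h => ⟨h.1, le_antisymm (h2 x h.2) (h1 x h.1)⟩, fun h => ⟨h.1, h3 x h.1 h.2⟩⟩
  · ext x
    refine ⟨fun h => ⟨h.2, ?_⟩, fun h => ?_⟩
    · simpa using le_antisymm (h2 x h.2) (h1 x h.1)
    · have h0 : m x = 0 := by simpa using h.2
      exact ⟨h4 x h.1 h0, h.1⟩

/-- Finitely many strictly convex polyhedral cones pairwise meeting in common faces form, together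
with all their faces, a fan. -/
lemma isFan_of_meetInFace {M : Set (Set (V n))} (hfin : M.Finite)
    (hM : ∀ C ∈ M, IsPolyhedralCone C ∧ IsStrictlyConvexCone C)
    (hmeet : ∀ C ∈ M, ∀ D ∈ M, MeetInFace C D) :
    IsFan {τ | ∃ C ∈ M, IsFaceOf τ C} := by
  refine ⟨?_, ?_, ?_, ?_⟩
  · have : {τ | ∃ C ∈ M, IsFaceOf τ C} = ⋃ C ∈ M, {τ | IsFaceOf τ C} := by ext; simp
    rw [this]
    refine hfin.biUnion fun C hC => ?_
    obtain ⟨s, rfl⟩ := (hM C hC).1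
    refine (s.powerset.finite_toSet.image coneOf).subset ?_
    rintro τ ⟨m, hm, rfl⟩
    exact ⟨_, Finset.mem_coe.2 (Finset.mem_powerset.2 (Finset.filter_subset _ _)),
      (face_eq_coneOf_filter m hm).symm⟩
  · rintro τ ⟨C, hC, m, hm, rfl⟩
    obtain ⟨⟨s, rfl⟩, hconv⟩ := hM C hC
    refine ⟨⟨_, face_eq_coneOf_filter m hm⟩, Set.Subset.antisymm ?_ ?_⟩
    · rintro x ⟨h1, h2⟩
      rw [← hconv]
      exact ⟨h1.1, (Set.mem_neg.1 h2).1⟩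
    · rintro x rfl
      have h0 : (0 : V n) ∈ {x ∈ coneOf s | m x = 0} := ⟨coneOf_zero_mem s, map_zero m⟩
      exact ⟨h0, by simpa using h0⟩
  · rintro σ ⟨C, hC, hσ⟩ τ hτ
    obtain ⟨⟨s, rfl⟩, -⟩ := hM C hC
    exact ⟨_, hC, hσ.trans hτ⟩
  · rintro σ ⟨C, hC, hσ⟩ τ ⟨D, hD, hτ⟩
    obtain ⟨hFC, hFD⟩ := hmeet C hC D hD
    obtain ⟨⟨s, rfl⟩, -⟩ := hM C hC
    obtain ⟨⟨t, rfl⟩, -⟩ := hM D hD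
    -- `σ` and `τ` cut out faces of `F = C ∩ D`, and `σ ∩ τ` is the intersection of these.
    have h1 : IsFaceOf (σ ∩ (coneOf s ∩ coneOf t)) (coneOf s ∩ coneOf t) :=
      (hσ.inter hFC).restrict Set.inter_subset_right Set.inter_subset_left
    have h2 : IsFaceOf (τ ∩ (coneOf s ∩ coneOf t)) (coneOf s ∩ coneOf t) :=
      (hτ.inter hFD).restrict Set.inter_subset_right Set.inter_subset_right
    have h3 : IsFaceOf (σ ∩ τ) (coneOf s ∩ coneOf t) := by
      convert h1.inter h2 using 1
      ext x
      constructor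
      · rintro ⟨hx, hy⟩
        exact ⟨⟨hx, hσ.subset hx, hτ.subset hy⟩, hy, hσ.subset hx, hτ.subset hy⟩
      · rintro ⟨hx, hy⟩
        exact ⟨hx.1, hy.1⟩
    exact ⟨(hFC.trans h3).restrict Set.inter_subset_left hσ.subset,
      (hFD.trans h3).restrict Set.inter_subset_right hτ.subset⟩

end Cones

/-! ### Coordinates with respect to `e` and the `fᵢ` -/

/-- The weight `uᵢ` in the uniform formula `gᵢ = uᵢ h - fᵢ`: it is `u` at the last index and `1`
elsewhere. -/
noncomputable def wt (n : ℕ) (u : ℤ) (i : Fin n) : ℝ := if (i : ℕ) < n - 1 then 1 else u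

/-- The coefficient of `f_k` in the expansion of a vector in the basis `e, f₁, …, f_{n-1}`,
extended by `0` to `f_n`. As `∑ f_k = 0`, only the differences of these coefficients are
intrinsic. -/
noncomputable def fCoord (n : ℕ) (k : Fin n) : V n →ₗ[ℝ] ℝ :=
  if (k : ℕ) < n - 1 then LinearMap.proj k else 0

/-- The coefficient of `e` in the expansion of a vector in the basis `e, f₁, …, f_{n-1}`. -/
def eCoord (n : ℕ) (hn : 3 ≤ n) : V n →ₗ[ℝ] ℝ := LinearMap.proj ⟨n - 1, by omega⟩

section Coordinates

variable {n : ℕ} {u : ℤ}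

lemma wt_pos (hu : 1 ≤ u) (i : Fin n) : 0 < wt n u i := by
  unfold wt
  split_ifs
  · exact one_pos
  · exact_mod_cast hu

lemma gVec_eq (i : Fin n) : gVec n u i = -(wt n u i • eVec n) - fVec n i := by
  unfold gVec wt hVec
  split_ifs <;> simp

@[simp] lemma eCoord_eVec (hn : 3 ≤ n) : eCoord n hn (eVec n) = 1 := by
  simp [eCoord, eVec]

@[simp] lemma eCoord_fVec (hn : 3 ≤ n) (i : Fin n) : eCoord n hn (fVec n i) = 0 := by
  unfold eCoord fVec
  split_ifs with h
  · have : (⟨n - 1, by omega⟩ : Fin n) ≠ i := by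
      intro h'
      have := congrArg Fin.val h'
      simp at this
      omega
    simp [this]
  · simp

@[simp] lemma fCoord_eVec (k : Fin n) : fCoord n k (eVec n) = 0 := by
  unfold fCoord eVec
  split_ifs with h
  · simp [h.ne]
  · simp

/-- The value of `fCoord k` on `f_i` is `δ_{ki}` up to a constant independent of `k`. -/
lemma fCoord_fVec (k i : Fin n) :
    fCoord n k (fVec n i) =
      (if k = i then 1 else 0) - (if (i : ℕ) < n - 1 then 0 else 1) := by
  unfold fCoord fVec
  have hk := k.2
  have hi := i.2
  split_ifs with h1 h2 h3 h4 h5 h6 <;> simp_all [Fin.ext_iff] <;> grind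

lemma sum_fVec (hn : 3 ≤ n) : ∑ k, fVec n k = 0 := by
  obtain ⟨m, rfl⟩ : ∃ m, n = m + 1 := ⟨n - 1, by omega⟩
  ext j
  rw [Fin.sum_univ_castSucc]
  refine Fin.lastCases ?_ (fun j => ?_) j
  · simp [fVec]
  · have := j.2
    simp [fVec, this.ne, Pi.single_apply]

lemma expand₀ (hn : 3 ≤ n) (x : V n) :
    x = eCoord n hn x • eVec n + ∑ k, fCoord n k x • fVec n k := by
  obtain ⟨m, rfl⟩ : ∃ m, n = m + 1 := ⟨n - 1, by omega⟩
  ext j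
  rw [Fin.sum_univ_castSucc]
  refine Fin.lastCases ?_ (fun j => ?_) j
  · simp [fVec, eVec, fCoord, eCoord, ← Fin.last.eq_1]
  · have := j.2
    simp [fVec, eVec, fCoord, this.ne, Pi.single_apply]

lemma expand (hn : 3 ≤ n) (l : ℝ) (x : V n) :
    x = eCoord n hn x • eVec n + ∑ k, (fCoord n k x - l) • fVec n k := by
  simp only [sub_smul, Finset.sum_sub_distrib, ← Finset.smul_sum, sum_fVec hn, smul_zero, sub_zero]
  exact expand₀ hn x

end Coordinates

/-! ### Inequalities for the maximal cones -/

section MaxCones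

variable {n : ℕ} {u : ℤ}

/-- `σᵢ` consists of the points whose smallest coefficient `a_k` is `a_i` and for which
`t + uᵢ (a_k - a_i) ≥ 0` for every `k ≠ i`. -/
lemma mem_sigmaI (hn : 3 ≤ n) (hu : 1 ≤ u) (i : Fin n) (x : V n) :
    x ∈ sigmaI n u i ↔ ∀ k, k ≠ i → fCoord n i x ≤ fCoord n k x ∧
      0 ≤ eCoord n hn x + wt n u i * (fCoord n k x - fCoord n i x) := by
  have hw := wt_pos hu i
  constructor
  · intro hx k hk
    constructor
    · have := nonneg_on_coneOf (fCoord n k - fCoord n i) ?_ x hx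
      · simpa using this
      · intro v hv
        simp only [genI, Finset.mem_insert, Finset.mem_image, Finset.mem_erase] at hv
        rcases hv with rfl | rfl | ⟨l, ⟨hl, -⟩, rfl⟩
        · simp
        · simp [gVec_eq, fCoord_fVec, hk]
        · simp [fCoord_fVec, hl.symm]
          split_ifs <;> norm_num
    · have := nonneg_on_coneOf (eCoord n hn + wt n u i • (fCoord n k - fCoord n i)) ?_ x hx
      · simpa using this
      · intro v hv
        simp only [genI, Finset.mem_insert, Finset.mem_image, Finset.mem_erase] at hv
        rcases hv with rfl | rfl | ⟨l, ⟨hl, -⟩, rfl⟩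
        · simp
        · simp [gVec_eq, fCoord_fVec, hk]
        · simp [fCoord_fVec, hl.symm]
          split_ifs <;> simp [hw.le]
  · intro h
    have hne : (Finset.univ.erase i).Nonempty := by
      rw [← Finset.card_pos, Finset.card_erase_of_mem (Finset.mem_univ _)]
      simp; omega
    obtain ⟨j, hj, hmin⟩ := Finset.exists_min_image _ (fun k => fCoord n k x) hne
    have hj' := h j (Finset.ne_of_mem_erase hj)
    -- Normalise the expansion so that the second smallest coefficient becomes `0`.
    have hx : x = (eCoord n hn x + wt n u i * (fCoord n j x - fCoord n i x)) • eVec n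
        + (fCoord n j x - fCoord n i x) • gVec n u i
        + ∑ k ∈ Finset.univ.erase i, (fCoord n k x - fCoord n j x) • fVec n k := by
      conv_lhs => rw [expand hn (fCoord n j x) x]
      rw [← Finset.add_sum_erase _ _ (Finset.mem_univ i), gVec_eq]
      module
    rw [hx]
    refine coneOf_add_mem (coneOf_add_mem (coneOf_smul_mem hj'.2 ?_)
      (coneOf_smul_mem (sub_nonneg.2 hj'.1) ?_))
      (coneOf_sum_mem fun k hk => coneOf_smul_mem (sub_nonneg.2 (hmin k hk)) ?_)
    · exact mem_coneOf_of_mem (by simp [genI])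
    · exact mem_coneOf_of_mem (by simp [genI])
    · refine mem_coneOf_of_mem ?_
      simp only [genI, Finset.mem_insert, Finset.mem_image]
      exact Or.inr (Or.inr ⟨k, hk, rfl⟩)

/-- `σ_{ij}` consists of the points whose two smallest coefficients are `a_i` and `a_j`, and for
which `t + uᵢ (a_j - a_i) ≤ 0` and `t + u_j (a_i - a_j) ≤ 0`. -/
lemma mem_sigmaIJ (hn : 3 ≤ n) (hu : 1 ≤ u) {i j : Fin n} (hij : i ≠ j) (x : V n) :
    x ∈ sigmaIJ n u i j ↔
      (∀ k, k ≠ i → k ≠ j → fCoord n i x ≤ fCoord n k x ∧ fCoord n j x ≤ fCoord n k x) ∧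
      eCoord n hn x + wt n u i * (fCoord n j x - fCoord n i x) ≤ 0 ∧
      eCoord n hn x + wt n u j * (fCoord n i x - fCoord n j x) ≤ 0 := by
  have hwi := wt_pos hu i
  have hwj := wt_pos hu j
  constructor
  · intro hx
    have key : ∀ m : V n →ₗ[ℝ] ℝ, 0 ≤ m (-eVec n) → 0 ≤ m (gVec n u i) → 0 ≤ m (gVec n u j) →
        (∀ l, l ≠ i → l ≠ j → 0 ≤ m (fVec n l)) → 0 ≤ m x := by
      intro m h1 h2 h3 h4
      refine nonneg_on_coneOf m ?_ x hx
      intro v hv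
      simp only [genIJ, Finset.mem_insert, Finset.mem_image, Finset.mem_erase] at hv
      rcases hv with rfl | rfl | rfl | ⟨l, ⟨hl, hl', -⟩, rfl⟩
      exacts [h1, h2, h3, h4 l hl' hl]
    refine ⟨fun k hki hkj => ⟨?_, ?_⟩, ?_, ?_⟩
    · have := key (fCoord n k - fCoord n i) (by simp)
        (by simp [gVec_eq, fCoord_fVec, hki]) (by simp [gVec_eq, fCoord_fVec, hij, hkj])
        (fun l hl hl' => by
          simp [fCoord_fVec, hl.symm]; split_ifs <;> norm_num)
      simpa using this
    · have := key (fCoord n k - fCoord n j) (by simp)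
        (by simp [gVec_eq, fCoord_fVec, hki, hij.symm]) (by simp [gVec_eq, fCoord_fVec, hkj])
        (fun l hl hl' => by
          simp [fCoord_fVec, hl'.symm]; split_ifs <;> norm_num)
      simpa using this
    · have := key (-(eCoord n hn + wt n u i • (fCoord n j - fCoord n i))) (by simp)
        (by simp [gVec_eq, fCoord_fVec, hij.symm])
        (by simp [gVec_eq, fCoord_fVec, hij]; linarith)
        (fun l hl hl' => by simp [fCoord_fVec, hl.symm, hl'.symm])
      simp at this
      linarith
    · have := key (-(eCoord n hn + wt n u j • (fCoord n i - fCoord n j))) (by simp)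
        (by simp [gVec_eq, fCoord_fVec, hij.symm]; linarith)
        (by simp [gVec_eq, fCoord_fVec, hij])
        (fun l hl hl' => by simp [fCoord_fVec, hl.symm, hl'.symm])
      simp at this
      linarith
  · rintro ⟨h1, h2, h3⟩
    -- Normalise the expansion so that the larger of `a_i` and `a_j` becomes `0`.
    set l := max (fCoord n i x) (fCoord n j x) with hl
    have hx : x = (-(eCoord n hn x + wt n u i * (l - fCoord n i x)
          + wt n u j * (l - fCoord n j x))) • hVec n
        + (l - fCoord n i x) • gVec n u i + (l - fCoord n j x) • gVec n u j
        + ∑ k ∈ (Finset.univ.erase i).erase j, (fCoord n k x - l) • fVec n k := by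
      conv_lhs => rw [expand hn l x]
      rw [← Finset.add_sum_erase _ _ (Finset.mem_univ i),
        ← Finset.add_sum_erase _ _ (Finset.mem_erase.2 ⟨hij.symm, Finset.mem_univ j⟩),
        gVec_eq, gVec_eq, hVec]
      module
    have hα : 0 ≤ -(eCoord n hn x + wt n u i * (l - fCoord n i x)
          + wt n u j * (l - fCoord n j x)) := by
      rcases max_cases (fCoord n i x) (fCoord n j x) with ⟨h, -⟩ | ⟨h, -⟩ <;>
        rw [hl, h] <;> linarith
    rw [hx]
    refine coneOf_add_mem (coneOf_add_mem (coneOf_add_mem (coneOf_smul_mem hα ?_)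
      (coneOf_smul_mem (sub_nonneg.2 (le_max_left _ _)) ?_))
      (coneOf_smul_mem (sub_nonneg.2 (le_max_right _ _)) ?_))
      (coneOf_sum_mem fun k hk => coneOf_smul_mem (sub_nonneg.2 ?_) ?_)
    · exact mem_coneOf_of_mem (by simp [genIJ])
    · exact mem_coneOf_of_mem (by simp [genIJ])
    · exact mem_coneOf_of_mem (by simp [genIJ])
    · simp only [Finset.mem_erase] at hk
      exact max_le (h1 k hk.2.1 hk.1).1 (h1 k hk.2.1 hk.1).2
    · refine mem_coneOf_of_mem ?_
      simp only [genIJ, Finset.mem_insert, Finset.mem_image]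
      exact Or.inr (Or.inr (Or.inr ⟨k, hk, rfl⟩))

lemma sigmaIJ_comm (i j : Fin n) : sigmaIJ n u i j = sigmaIJ n u j i := by
  unfold sigmaIJ genIJ
  rw [Finset.erase_right_comm, Finset.insert_comm (gVec n u i)]

/-! ### Pairwise intersections -/

lemma meet_I_I (hn : 3 ≤ n) (hu : 1 ≤ u) {i j : Fin n} (hij : i ≠ j) :
    MeetInFace (sigmaI n u i) (sigmaI n u j) := by
  have hwi := wt_pos hu i
  have hwj := wt_pos hu j
  apply meetInFace_of_sep (fCoord n j - fCoord n i) <;>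
    simp only [mem_sigmaI hn hu, LinearMap.sub_apply]
  · intro x hx
    linarith [(hx j hij.symm).1]
  · intro x hx
    linarith [(hx i hij).1]
  · intro x hx h0 k hk
    have e : fCoord n j x = fCoord n i x := by linarith
    have hk' : fCoord n j x ≤ fCoord n k x := by
      by_cases hki : k = i
      · rw [hki, e]
      · linarith [(hx k hki).1]
    have h2 := (hx j hij.symm).2
    rw [e, sub_self, mul_zero, add_zero] at h2
    exact ⟨hk', add_nonneg h2 (mul_nonneg hwj.le (by linarith))⟩
  · intro x hx h0 k hk
    have e : fCoord n j x = fCoord n i x := by linarith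
    have hk' : fCoord n i x ≤ fCoord n k x := by
      by_cases hki : k = j
      · rw [hki, e]
      · linarith [(hx k hki).1]
    have h2 := (hx i hij).2
    rw [e, sub_self, mul_zero, add_zero] at h2
    exact ⟨hk', add_nonneg h2 (mul_nonneg hwi.le (by linarith))⟩

lemma meet_I_IJ (hn : 3 ≤ n) (hu : 1 ≤ u) {i j : Fin n} (hij : i ≠ j) :
    MeetInFace (sigmaI n u i) (sigmaIJ n u i j) := by
  have hwi := wt_pos hu i
  have hwj := wt_pos hu j
  apply meetInFace_of_sep (eCoord n hn + wt n u i • (fCoord n j - fCoord n i)) <;>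
    simp only [mem_sigmaI hn hu, mem_sigmaIJ hn hu hij, LinearMap.sub_apply, LinearMap.add_apply,
      LinearMap.smul_apply, smul_eq_mul]
  · intro x hx
    exact (hx j hij.symm).2
  · intro x hx
    exact hx.2.1
  · intro x hx h0
    have hj := (hx j hij.symm).1
    refine ⟨fun k hki hkj => ⟨(hx k hki).1, ?_⟩, h0.le, ?_⟩
    · have := (hx k hki).2
      have h3 : wt n u i * (fCoord n j x - fCoord n i x) ≤
        wt n u i * (fCoord n k x - fCoord n i x) := by linarith
      linarith [le_of_mul_le_mul_left h3 hwi]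
    · nlinarith [mul_nonneg hwi.le (sub_nonneg.2 hj), mul_nonneg hwj.le (sub_nonneg.2 hj)]
  · rintro x ⟨hx, h1, h2⟩ h0 k hki
    have hj : fCoord n i x ≤ fCoord n j x := by
      by_contra! hlt
      nlinarith [mul_pos hwi (sub_pos.2 hlt), mul_pos hwj (sub_pos.2 hlt)]
    by_cases hkj : k = j
    · subst hkj
      exact ⟨hj, h0.ge⟩
    · refine ⟨(hx k hki hkj).1, ?_⟩
      nlinarith [mul_nonneg hwi.le (sub_nonneg.2 (hx k hki hkj).2)]

lemma meet_I_JK (hn : 3 ≤ n) (hu : 1 ≤ u) {i j k : Fin n} (hij : i ≠ j) (hik : i ≠ k)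
    (hjk : j ≠ k) : MeetInFace (sigmaI n u i) (sigmaIJ n u j k) := by
  have hwi := wt_pos hu i
  have hwj := wt_pos hu j
  have hwk := wt_pos hu k
  -- The common face is `t = 0`, `a_i = a_j = a_k`; the coefficient `uᵢ + 1` makes the functional
  -- strictly positive on the rest of `σᵢ`.
  apply meetInFace_of_sep (eCoord n hn + (wt n u i + 1) • (fCoord n j - fCoord n i)
      + (wt n u i + 1) • (fCoord n k - fCoord n i)) <;>
    simp only [mem_sigmaI hn hu, mem_sigmaIJ hn hu hjk, LinearMap.sub_apply, LinearMap.add_apply,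
      LinearMap.smul_apply, smul_eq_mul]
  · intro x hx
    obtain ⟨h1, h2⟩ := hx j hij.symm
    obtain ⟨h3, h4⟩ := hx k hik.symm
    nlinarith [mul_nonneg hwi.le (sub_nonneg.2 h3)]
  · rintro x ⟨hx, h1, h2⟩
    obtain ⟨h3, h4⟩ := hx i hij hik
    have ht : eCoord n hn x ≤ 0 := by
      by_contra! hlt
      nlinarith [mul_pos hwj hlt, mul_pos hwk hlt]
    nlinarith [mul_nonneg hwi.le (sub_nonneg.2 h3), mul_nonneg hwi.le (sub_nonneg.2 h4)]
  · intro x hx h0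
    obtain ⟨h1, h2⟩ := hx j hij.symm
    obtain ⟨h3, h4⟩ := hx k hik.symm
    have e1 : fCoord n j x = fCoord n i x := by
      nlinarith [mul_nonneg hwi.le (sub_nonneg.2 h3)]
    have e2 : fCoord n k x = fCoord n i x := by
      nlinarith [mul_nonneg hwi.le (sub_nonneg.2 h3)]
    rw [e1, e2, sub_self, mul_zero, add_zero, add_zero] at h0
    simp only [e1, e2, h0, sub_self, mul_zero, add_zero, le_refl, and_self, and_true]
    intro l _ _
    by_cases hl : l = i
    · rw [hl]
    · exact (hx l hl).1
  · rintro x ⟨hx, h1, h2⟩ h0 l hl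
    obtain ⟨h3, h4⟩ := hx i hij hik
    have ht : eCoord n hn x ≤ 0 := by
      by_contra! hlt
      nlinarith [mul_pos hwj hlt, mul_pos hwk hlt]
    have h5 := mul_nonneg hwi.le (sub_nonneg.2 h3)
    have h6 := mul_nonneg hwi.le (sub_nonneg.2 h4)
    have e1 : fCoord n j x = fCoord n i x := by nlinarith
    have e2 : fCoord n k x = fCoord n i x := by nlinarith
    rw [e1, e2, sub_self, mul_zero, add_zero, add_zero] at h0
    have h7 : fCoord n i x ≤ fCoord n l x := by
      by_cases hlj : l = j
      · rw [hlj, e1]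
      by_cases hlk : l = k
      · rw [hlk, e2]
      · rw [← e1]; exact (hx l hlj hlk).1
    refine ⟨h7, ?_⟩
    rw [h0, zero_add]
    exact mul_nonneg hwi.le (sub_nonneg.2 h7)

lemma meet_IJ_IK (hn : 3 ≤ n) (hu : 1 ≤ u) {i j k : Fin n} (hij : i ≠ j) (hik : i ≠ k)
    (hjk : j ≠ k) : MeetInFace (sigmaIJ n u i j) (sigmaIJ n u i k) := by
  have hwi := wt_pos hu i
  have hwj := wt_pos hu j
  have hwk := wt_pos hu k
  have aux : ∀ {j k : Fin n}, i ≠ j → i ≠ k → j ≠ k → ∀ x ∈ sigmaIJ n u i j,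
      fCoord n k x = fCoord n j x → x ∈ sigmaIJ n u i k := by
    intro j k hij hik hjk x hx e
    rw [mem_sigmaIJ hn hu hij] at hx
    rw [mem_sigmaIJ hn hu hik]
    obtain ⟨hx, h1, h2⟩ := hx
    have h3 := (hx k hik.symm hjk.symm).1
    refine ⟨fun l hli hlk => ?_, by rw [e]; exact h1, ?_⟩
    · by_cases hlj : l = j
      · subst hlj
        exact ⟨e ▸ h3, e.le⟩
      · rw [e]
        exact hx l hli hlj
    · nlinarith [mul_nonneg hwi.le (sub_nonneg.2 h3),
        mul_nonneg (wt_pos hu k).le (sub_nonneg.2 h3)]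
  apply meetInFace_of_sep (fCoord n k - fCoord n j)
  · intro x hx
    rw [mem_sigmaIJ hn hu hij] at hx
    exact sub_nonneg.2 (hx.1 k hik.symm hjk.symm).2
  · intro x hx
    rw [mem_sigmaIJ hn hu hik] at hx
    exact sub_nonpos.2 (hx.1 j hij.symm hjk).2
  · exact fun x hx h0 => aux hij hik hjk x hx (sub_eq_zero.1 h0)
  · exact fun x hx h0 => aux hik hij hjk.symm x hx (sub_eq_zero.1 h0).symm

lemma meet_IJ_KL (hn : 3 ≤ n) (hu : 1 ≤ u) {i j k l : Fin n} (hij : i ≠ j) (hkl : k ≠ l)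
    (hik : i ≠ k) (hil : i ≠ l) (hjk : j ≠ k) (hjl : j ≠ l) :
    MeetInFace (sigmaIJ n u i j) (sigmaIJ n u k l) := by
  have aux : ∀ {i j k l : Fin n}, i ≠ j → k ≠ l → i ≠ k → i ≠ l → j ≠ k → j ≠ l →
      ∀ x ∈ sigmaIJ n u i j, fCoord n k x + fCoord n l x = fCoord n i x + fCoord n j x →
      x ∈ sigmaIJ n u k l := by
    intro i j k l hij hkl hik hil hjk hjl x hx e
    rw [mem_sigmaIJ hn hu hij] at hx
    rw [mem_sigmaIJ hn hu hkl]
    obtain ⟨hx, h1, h2⟩ := hx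
    obtain ⟨h3, h4⟩ := hx k hik.symm hjk.symm
    obtain ⟨h5, h6⟩ := hx l hil.symm hjl.symm
    have e1 : fCoord n j x = fCoord n i x := by linarith
    have e2 : fCoord n k x = fCoord n i x := by linarith
    have e3 : fCoord n l x = fCoord n i x := by linarith
    rw [e1, sub_self, mul_zero, add_zero] at h1
    simp only [e2, e3, sub_self, mul_zero, add_zero, and_self, h1, and_true]
    intro p _ _
    by_cases hpi : p = i
    · rw [hpi]
    by_cases hpj : p = j
    · rw [hpj, e1]
    exact (hx p hpi hpj).1
  apply meetInFace_of_sep (fCoord n k + fCoord n l - (fCoord n i + fCoord n j))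
  · intro x hx
    rw [mem_sigmaIJ hn hu hij] at hx
    simp only [LinearMap.sub_apply, LinearMap.add_apply]
    linarith [(hx.1 k hik.symm hjk.symm).1, (hx.1 l hil.symm hjl.symm).2]
  · intro x hx
    rw [mem_sigmaIJ hn hu hkl] at hx
    simp only [LinearMap.sub_apply, LinearMap.add_apply]
    linarith [(hx.1 i hik hil).1, (hx.1 j hjk hjl).2]
  · exact fun x hx h0 => aux hij hkl hik hil hjk hjl x hx (sub_eq_zero.1 h0)
  · exact fun x hx h0 =>
      aux hkl hij hik.symm hjk.symm hil.symm hjl.symm x hx (sub_eq_zero.1 h0).symm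

lemma meet_I_any (hn : 3 ≤ n) (hu : 1 ≤ u) (i : Fin n) {k l : Fin n} (hkl : k ≠ l) :
    MeetInFace (sigmaI n u i) (sigmaIJ n u k l) := by
  by_cases hik : i = k
  · subst hik
    exact meet_I_IJ hn hu hkl
  by_cases hil : i = l
  · subst hil
    rw [sigmaIJ_comm]
    exact meet_I_IJ hn hu hkl.symm
  exact meet_I_JK hn hu hik hil hkl

lemma meet_IJ_any (hn : 3 ≤ n) (hu : 1 ≤ u) {i j k l : Fin n} (hij : i ≠ j) (hkl : k ≠ l) :
    MeetInFace (sigmaIJ n u i j) (sigmaIJ n u k l) := by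
  have shared : ∀ {i j l : Fin n}, i ≠ j → i ≠ l →
      MeetInFace (sigmaIJ n u i j) (sigmaIJ n u i l) := by
    intro i j l hij hil
    by_cases hjl : j = l
    · subst hjl
      exact meetInFace_self _
    · exact meet_IJ_IK hn hu hij hil hjl
  by_cases hik : i = k
  · subst hik
    exact shared hij hkl
  by_cases hil : i = l
  · subst hil
    rw [sigmaIJ_comm k]
    exact shared hij hkl.symm
  by_cases hjk : j = k
  · subst hjk
    rw [sigmaIJ_comm i]
    exact shared hij.symm hkl
  by_cases hjl : j = l
  · subst hjl
    rw [sigmaIJ_comm i, sigmaIJ_comm k]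
    exact shared hij.symm hkl.symm
  exact meet_IJ_KL hn hu hij hkl hik hil hjk hjl

lemma meet_maxCones (hn : 3 ≤ n) (hu : 1 ≤ u) :
    ∀ C ∈ maxCones n u, ∀ D ∈ maxCones n u, MeetInFace C D := by
  rintro C (⟨i, rfl⟩ | ⟨i, j, hij, rfl⟩) D (⟨k, rfl⟩ | ⟨k, l, hkl, rfl⟩)
  · by_cases hik : i = k
    · subst hik
      exact meetInFace_self _
    · exact meet_I_I hn hu hik
  · exact meet_I_any hn hu i hkl
  · exact (meet_I_any hn hu k hij).symm
  · exact meet_IJ_any hn hu hij hkl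

/-! ### Dimension, strict convexity, rationality and completeness -/

lemma isRational_coneOf {s : Finset (V n)} (h : ∀ v ∈ s, v ∈ Set.range (castZ (n := n))) :
    IsRationalPolyhedralCone (coneOf s) := by
  classical
  obtain ⟨t, -, ht⟩ := (Finset.subset_set_image_iff (s := Set.univ) (t := s) (f := castZ)).1
    (by rw [Set.image_univ]; exact h)
  refine ⟨t, ?_⟩
  rw [← ht]

lemma eVec_mem_range : eVec n ∈ Set.range (castZ (n := n)) :=
  ⟨fun j => if (j : ℕ) = n - 1 then 1 else 0, by ext j; simp [castZ, eVec]⟩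

lemma fVec_mem_range (i : Fin n) : fVec n i ∈ Set.range (castZ (n := n)) := by
  refine ⟨if (i : ℕ) < n - 1 then Pi.single i 1 else fun j => if (j : ℕ) = n - 1 then 0 else -1, ?_⟩
  ext j
  unfold castZ fVec
  split_ifs
  · simp [Pi.single_apply]
  · simp

lemma hVec_mem_range : hVec n ∈ Set.range (castZ (n := n)) := by
  obtain ⟨a, ha⟩ := eVec_mem_range (n := n)
  exact ⟨-a, by rw [hVec, ← ha]; ext j; simp [castZ]⟩

lemma gVec_mem_range (i : Fin n) : gVec n u i ∈ Set.range (castZ (n := n)) := by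
  obtain ⟨a, ha⟩ := hVec_mem_range (n := n)
  obtain ⟨b, hb⟩ := fVec_mem_range i
  unfold gVec
  split_ifs
  · exact ⟨a - b, by rw [← ha, ← hb]; ext j; simp [castZ]⟩
  · exact ⟨u • a - b, by rw [← ha, ← hb]; ext j; simp [castZ]⟩

lemma dim_of_mem_span (hn : 3 ≤ n) {C : Set (V n)} (he : eVec n ∈ Submodule.span ℝ C)
    (hf : ∀ k, fVec n k ∈ Submodule.span ℝ C) : dimCone C = n := by
  have : Submodule.span ℝ C = ⊤ := by
    rw [eq_top_iff]
    intro x _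
    rw [expand₀ hn x]
    exact add_mem (Submodule.smul_mem _ _ he)
      (Submodule.sum_mem _ fun k _ => Submodule.smul_mem _ _ (hf k))
  rw [dimCone, this, finrank_top, Module.finrank_fin_fun]

lemma dim_sigmaI (hn : 3 ≤ n) (i : Fin n) : dimCone (sigmaI n u i) = n := by
  have hsub : ∀ v ∈ genI n u i, v ∈ Submodule.span ℝ (sigmaI n u i) :=
    fun v hv => Submodule.subset_span (mem_coneOf_of_mem hv)
  have hf : ∀ k, k ≠ i → fVec n k ∈ Submodule.span ℝ (sigmaI n u i) := by
    intro k hk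
    apply hsub
    simp only [genI, Finset.mem_insert, Finset.mem_image]
    exact Or.inr (Or.inr ⟨k, by simp [hk], rfl⟩)
  refine dim_of_mem_span hn (hsub _ (by simp [genI])) fun k => ?_
  by_cases hk : k = i
  · subst hk
    have h := sum_fVec hn
    rw [← Finset.add_sum_erase _ _ (Finset.mem_univ k)] at h
    rw [eq_neg_of_add_eq_zero_left h]
    exact Submodule.neg_mem _ (Submodule.sum_mem _ fun l hl => hf l (Finset.ne_of_mem_erase hl))
  · exact hf k hk

lemma dim_sigmaIJ (hn : 3 ≤ n) (i j : Fin n) : dimCone (sigmaIJ n u i j) = n := by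
  have hsub : ∀ v ∈ genIJ n u i j, v ∈ Submodule.span ℝ (sigmaIJ n u i j) :=
    fun v hv => Submodule.subset_span (mem_coneOf_of_mem hv)
  have he : eVec n ∈ Submodule.span ℝ (sigmaIJ n u i j) := by
    rw [← Submodule.neg_mem_iff]
    exact hsub _ (by simp [genIJ, hVec])
  have hg : ∀ k, gVec n u k ∈ genIJ n u i j → fVec n k ∈ Submodule.span ℝ (sigmaIJ n u i j) := by
    intro k hk
    have : fVec n k = -(wt n u k • eVec n) - gVec n u k := by rw [gVec_eq]; abel
    rw [this]
    exact sub_mem (Submodule.neg_mem _ (Submodule.smul_mem _ _ he)) (hsub _ hk)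
  refine dim_of_mem_span hn he fun k => ?_
  by_cases hki : k = i
  · exact hg k (by simp [genIJ, hki])
  by_cases hkj : k = j
  · exact hg k (by simp [genIJ, hkj])
  apply hsub
  simp only [genIJ, Finset.mem_insert, Finset.mem_image]
  exact Or.inr (Or.inr (Or.inr ⟨k, by simp [hki, hkj], rfl⟩))

lemma eq_zero_of_coords (hn : 3 ≤ n) (i : Fin n) {x : V n} (ht : eCoord n hn x = 0)
    (h : ∀ k, fCoord n k x = fCoord n i x) : x = 0 := by
  rw [expand hn (fCoord n i x) x]
  simp [ht, h]

lemma isStrictlyConvex_coneOf {s : Finset (V n)}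
    (h : ∀ x, x ∈ coneOf s → -x ∈ coneOf s → x = 0) : IsStrictlyConvexCone (coneOf s) := by
  refine Set.Subset.antisymm (fun x hx => h x hx.1 hx.2) ?_
  rintro x rfl
  exact ⟨coneOf_zero_mem s, by simpa using coneOf_zero_mem s⟩

lemma exists_third (hn : 3 ≤ n) (i j : Fin n) : ∃ k : Fin n, k ≠ i ∧ k ≠ j := by
  have : ∃ k, k ∉ ({i, j} : Finset (Fin n)) := by
    by_contra! h
    have h1 := Finset.card_le_card (fun k _ => h k : Finset.univ ⊆ ({i, j} : Finset (Fin n)))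
    have h2 := Finset.card_le_two (a := i) (b := j)
    simp only [Finset.card_univ, Fintype.card_fin] at h1
    omega
  simpa using this

lemma strictlyConvex_sigmaI (hn : 3 ≤ n) (hu : 1 ≤ u) (i : Fin n) :
    IsStrictlyConvexCone (sigmaI n u i) := by
  refine isStrictlyConvex_coneOf fun x hx hy => ?_
  have hx' := (mem_sigmaI hn hu i x).1 hx
  have hy' := (mem_sigmaI hn hu i (-x)).1 hy
  simp only [map_neg] at hy'
  have e : ∀ k, fCoord n k x = fCoord n i x := by
    intro k
    by_cases hk : k = i
    · rw [hk]
    · linarith [(hx' k hk).1, (hy' k hk).1]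
  obtain ⟨k, hk, -⟩ := exists_third hn i i
  have h1 := (hx' k hk).2
  have h2 := (hy' k hk).2
  simp only [e, sub_self, mul_zero, add_zero] at h1 h2
  exact eq_zero_of_coords hn i (by linarith) e

lemma strictlyConvex_sigmaIJ (hn : 3 ≤ n) (hu : 1 ≤ u) {i j : Fin n} (hij : i ≠ j) :
    IsStrictlyConvexCone (sigmaIJ n u i j) := by
  refine isStrictlyConvex_coneOf fun x hx hy => ?_
  obtain ⟨hx, h1, -⟩ := (mem_sigmaIJ hn hu hij x).1 hx
  obtain ⟨hy, h2, -⟩ := (mem_sigmaIJ hn hu hij (-x)).1 hy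
  simp only [map_neg] at hy h2
  -- A third index is what forces `a_i = a_j`.
  obtain ⟨k₀, hi, hj⟩ := exists_third hn i j
  have e₀ : fCoord n j x = fCoord n i x := by
    linarith [(hx k₀ hi hj).1, (hx k₀ hi hj).2, (hy k₀ hi hj).1, (hy k₀ hi hj).2]
  have e : ∀ k, fCoord n k x = fCoord n i x := by
    intro k
    by_cases hki : k = i
    · rw [hki]
    by_cases hkj : k = j
    · rw [hkj, e₀]
    · linarith [(hx k hki hkj).1, (hy k hki hkj).1]
  simp only [e, sub_self, mul_zero, add_zero] at h1 h2
  exact eq_zero_of_coords hn i (by linarith) e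

/-- Let `a_i ≤ a_j` be the two smallest coefficients of `x`: the sign of `t + uᵢ (a_j - a_i)`
decides whether `x` lies in `σᵢ` or in `σ_{ij}`. -/
lemma exists_maxCone (hn : 3 ≤ n) (hu : 1 ≤ u) (x : V n) : ∃ C ∈ maxCones n u, x ∈ C := by
  have hne : (Finset.univ : Finset (Fin n)).Nonempty := ⟨⟨0, by omega⟩, Finset.mem_univ _⟩
  obtain ⟨i, -, hi⟩ := Finset.exists_min_image _ (fun k => fCoord n k x) hne
  obtain ⟨k₀, hk₀, -⟩ := exists_third hn i i
  obtain ⟨j, hj, hjmin⟩ := Finset.exists_min_image (Finset.univ.erase i) (fun k => fCoord n k x)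
    ⟨k₀, by simp [hk₀]⟩
  have hij : i ≠ j := (Finset.ne_of_mem_erase hj).symm
  have hwi := wt_pos hu i
  have hwj := wt_pos hu j
  have hle : fCoord n i x ≤ fCoord n j x := hi j (Finset.mem_univ _)
  rcases le_total 0 (eCoord n hn x + wt n u i * (fCoord n j x - fCoord n i x)) with h | h
  · refine ⟨_, Or.inl ⟨i, rfl⟩, (mem_sigmaI hn hu i x).2 fun k hk =>
      ⟨hi k (Finset.mem_univ _), ?_⟩⟩
    have := hjmin k (by simp [hk])
    nlinarith [mul_nonneg hwi.le (sub_nonneg.2 this)]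
  · refine ⟨_, Or.inr ⟨i, j, hij, rfl⟩, (mem_sigmaIJ hn hu hij x).2
      ⟨fun k hki hkj => ⟨hi k (Finset.mem_univ _), hjmin k (by simp [hki])⟩, h, ?_⟩⟩
    nlinarith [mul_nonneg hwi.le (sub_nonneg.2 hle), mul_nonneg hwj.le (sub_nonneg.2 hle)]

lemma maxCones_finite : (maxCones n u).Finite := by
  refine Set.Finite.union ?_ ?_
  · refine (Set.finite_range (sigmaI n u)).subset ?_
    rintro C ⟨i, rfl⟩
    exact ⟨i, rfl⟩
  · refine (Set.finite_range fun p : Fin n × Fin n => sigmaIJ n u p.1 p.2).subset ?_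
    rintro C ⟨i, j, -, rfl⟩
    exact ⟨(i, j), rfl⟩

lemma maxCones_properties (hn : 3 ≤ n) (hu : 1 ≤ u) :
    ∀ C ∈ maxCones n u, IsPolyhedralCone C ∧ IsRationalPolyhedralCone C ∧
      IsStrictlyConvexCone C ∧ dimCone C = n := by
  rintro C (⟨i, rfl⟩ | ⟨i, j, hij, rfl⟩)
  · refine ⟨⟨_, rfl⟩, isRational_coneOf fun v hv => ?_, strictlyConvex_sigmaI hn hu i,
      dim_sigmaI hn i⟩
    simp only [genI, Finset.mem_insert, Finset.mem_image] at hv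
    rcases hv with rfl | rfl | ⟨l, -, rfl⟩
    exacts [eVec_mem_range, gVec_mem_range i, fVec_mem_range l]
  · refine ⟨⟨_, rfl⟩, isRational_coneOf fun v hv => ?_, strictlyConvex_sigmaIJ hn hu hij,
      dim_sigmaIJ hn i j⟩
    simp only [genIJ, Finset.mem_insert, Finset.mem_image] at hv
    rcases hv with rfl | rfl | rfl | ⟨l, -, rfl⟩
    exacts [hVec_mem_range, gVec_mem_range i, gVec_mem_range j, fVec_mem_range l]

end MaxCones

/-!
STATEMENT 10: For `n ≥ 3` and `u ≥ 1`, the cones `σᵢ` and `σ_{ij}` are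
`n`-dimensional strictly convex rational polyhedral cones, any two distinct ones
intersect in a common face, these cones together with all their faces form a
fan `Δ_u` in `ℝⁿ`, and this fan is complete.
-/

theorem stmt_10 (n : ℕ) (hn : 3 ≤ n) (u : ℤ) (hu : 1 ≤ u) :
    (∀ C ∈ maxCones n u, IsPolyhedralCone C ∧ IsRationalPolyhedralCone C ∧
      IsStrictlyConvexCone C ∧ dimCone C = n) ∧
    (∀ C₁ ∈ maxCones n u, ∀ C₂ ∈ maxCones n u, C₁ ≠ C₂ →
      IsFaceOf (C₁ ∩ C₂) C₁ ∧ IsFaceOf (C₁ ∩ C₂) C₂) ∧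
    IsFan (deltaU n u) ∧
    ⋃₀ (deltaU n u) = Set.univ := by
  refine ⟨maxCones_properties hn hu, fun C hC D hD _ => meet_maxCones hn hu C hC D hD,
    isFan_of_meetInFace maxCones_finite (fun C hC => ?_) (meet_maxCones hn hu),
    Set.eq_univ_of_forall fun x => ?_⟩
  · obtain ⟨h1, -, h2, -⟩ := maxCones_properties hn hu C hC
    exact ⟨h1, h2⟩
  · obtain ⟨C, hC, hx⟩ := exists_maxCone hn hu x
    exact ⟨C, ⟨C, hC, isFaceOf_refl C⟩, hx⟩
end

section
/- Fix integers n ≥ 3 and u ≥ 2, and consider the maximal cones of the fan Δ_u, namely σᵢ (1 ≤ i ≤ n) with generator set G(σᵢ) = {e, gᵢ} ∪ {f_k : k ≠ i} and σ_{ij} (1 ≤ i < j ≤ n) with generator set G(σ_{ij}) = {h, gᵢ, g_j} ∪ {f_k : k ≠ i, j}. Suppose given, for each maximal cone σ of Δ_u, a ℤ-linear functional m_σ : ℤⁿ → ℤ, such that the value on each generator is independent of the cone: whenever a vector v ∈ ℤⁿ belongs to G(σ) and to G(τ) for two maximal cones σ, τ, one has m_σ(v) = m_τ(v). Then all the functionals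 coincide: there is a single ℤ-linear functional m : ℤⁿ → ℤ with m_σ = m for every maximal cone σ of Δ_u. -/
/-!
Write `c i = 1` for `i < n` and `c n = u`, so that the generators satisfy the relations
`∑ f_k = 0`, `g_i = c i • h - f_i` and `h = -e`. By compatibility every generator `v` has a
well-defined value `V v`; put `S = ∑ V f_k`.

* On `σ_i`, the relation `∑ f_k = 0` gives `m (f_i) = V f_i - S`, so that
  `V g_i = S - V f_i - c i * V e` (`value_I`).
* On `σ_{ij}`, summing `f_i = c i • h - g_i`, the same for `j`, and the other `f_k` gives
  `V g_i + V g_j = (c i + c j) * V h + S - V f_i - V f_j` (`value_IJ`).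

Together, `(c i + c j) * (V h + V e) = S` for all `i ≠ j`. As `n ≥ 3`, the number `c i + c j` takes
both values `2` and `1 + u`, which differ because `u ≠ 1`. Hence `V h = -V e` and `S = 0`. It follows
that every functional takes the values `V e` and `V f_k` at `e` and at all the `f_k`, whether or not
these are generators of its cone, and these vectors span `ℤⁿ`.
-/

/-!
STATEMENT 12: For `n ≥ 3` and `u ≥ 2`, any family of `ℤ`-linear functionals on
`ℤⁿ`, indexed by the maximal cones of `Δ_u` (given here by their generator
sets), whose values on each generator are independent of the cone, is constant.
This is the statement `Pic(Y_u) = 0` for `u > 1`.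

Indices `1, …, n` of the paper correspond to `0, …, n − 1 : Fin n`, the last
index `n` of the paper being `n − 1`.
-/

/-- `e = eₙ` as an integral vector. -/
def eZ (n : ℕ) : Fin n → ℤ := fun j => if (j : ℕ) = n - 1 then 1 else 0

/-- `fᵢ = eᵢ` for `i < n`, and `fₙ = −(e₁ + ⋯ + e_{n−1})`, integrally. -/
def fZ (n : ℕ) (i : Fin n) : Fin n → ℤ :=
  if (i : ℕ) < n - 1 then Pi.single i 1
  else fun j => if (j : ℕ) = n - 1 then 0 else -1

/-- `h = −e`. -/
def hZ (n : ℕ) : Fin n → ℤ := -eZ n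

/-- `gᵢ = h − fᵢ` for `i < n`, and `gₙ = u·h − fₙ`. -/
def gZ (n : ℕ) (u : ℤ) (i : Fin n) : Fin n → ℤ :=
  if (i : ℕ) < n - 1 then hZ n - fZ n i
  else u • hZ n - fZ n i

/-- The generator set `G(σᵢ) = {e, gᵢ} ∪ {f_k : k ≠ i}`. -/
def genZI (n : ℕ) (u : ℤ) (i : Fin n) : Finset (Fin n → ℤ) :=
  insert (eZ n) (insert (gZ n u i) ((Finset.univ.erase i).image (fZ n)))

/-- The generator set `G(σ_{ij}) = {h, gᵢ, g_j} ∪ {f_k : k ≠ i, j}`. -/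
def genZIJ (n : ℕ) (u : ℤ) (i j : Fin n) : Finset (Fin n → ℤ) :=
  insert (hZ n) (insert (gZ n u i) (insert (gZ n u j)
    (((Finset.univ.erase i).erase j).image (fZ n))))

/-- The generator sets of the maximal cones of `Δ_u`. -/
def gensZ (n : ℕ) (u : ℤ) : Set (Finset (Fin n → ℤ)) :=
  {s | ∃ i, s = genZI n u i} ∪ {s | ∃ i j, i ≠ j ∧ s = genZIJ n u i j}

/-- The coefficient of `h` in `g_i`: it is `1` for all `i` but the last, and `u` for the last. -/
def coefZ (n : ℕ) (u : ℤ) (i : Fin n) : ℤ := if (i : ℕ) < n - 1 then 1 else u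

lemma gZ_eq (n : ℕ) (u : ℤ) (i : Fin n) : gZ n u i = coefZ n u i • hZ n - fZ n i := by
  unfold gZ coefZ
  split_ifs <;> simp

lemma sum_fZ (n : ℕ) : ∑ k, fZ n k = 0 := by
  rcases n with _ | n
  · simp
  ext j
  rw [Fin.sum_univ_castSucc]
  refine Fin.lastCases ?_ (fun j => ?_) j
  · simp [fZ, Finset.sum_apply, Fin.ext_iff, Nat.ne_of_gt]
  · simp [fZ, Finset.sum_apply, Pi.single_apply, j.isLt.ne]

lemma ext_eZ_fZ (n : ℕ) (a b : (Fin n → ℤ) →ₗ[ℤ] ℤ) (he : a (eZ n) = b (eZ n))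
    (hf : ∀ k, a (fZ n k) = b (fZ n k)) : a = b := by
  refine LinearMap.pi_ext' fun i => LinearMap.ext_ring ?_
  simp only [LinearMap.comp_apply, LinearMap.single_apply]
  by_cases hi : (i : ℕ) < n - 1
  · simpa [fZ, hi] using hf i
  · have : (Pi.single i 1 : Fin n → ℤ) = eZ n := by
      ext j
      have := i.isLt
      have := j.isLt
      simp only [Pi.single_apply, eZ, Fin.ext_iff]
      congr 1
      apply propext
      omega
    rw [this, he]

lemma map_gZ (n : ℕ) (u : ℤ) (a : (Fin n → ℤ) →ₗ[ℤ] ℤ) (i : Fin n) :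
    a (gZ n u i) = coefZ n u i * a (hZ n) - a (fZ n i) := by
  rw [gZ_eq, map_sub, map_smul, smul_eq_mul]

lemma map_hZ (n : ℕ) (a : (Fin n → ℤ) →ₗ[ℤ] ℤ) : a (hZ n) = -a (eZ n) := by
  rw [hZ, map_neg]

lemma map_sum_fZ (n : ℕ) (a : (Fin n → ℤ) →ₗ[ℤ] ℤ) : ∑ k, a (fZ n k) = 0 := by
  rw [← map_sum, sum_fZ, map_zero]

/-- A functional with prescribed values on `G(σ_i)` differs from the prescription at the
missing `f_i` by the sum of the prescribed values of all the `f_k`. -/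
lemma value_I (n : ℕ) (u : ℤ) (i : Fin n) (a : (Fin n → ℤ) →ₗ[ℤ] ℤ) (V : (Fin n → ℤ) → ℤ)
    (hV : ∀ v ∈ genZI n u i, a v = V v) :
    a (eZ n) = V (eZ n) ∧ (∀ k, k ≠ i → a (fZ n k) = V (fZ n k)) ∧
      a (fZ n i) = V (fZ n i) - ∑ k, V (fZ n k) ∧
      V (gZ n u i) = ∑ k, V (fZ n k) - V (fZ n i) - coefZ n u i * V (eZ n) := by
  have he : a (eZ n) = V (eZ n) := hV _ (by simp [genZI])
  have hg : a (gZ n u i) = V (gZ n u i) := hV _ (by simp [genZI])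
  have hf : ∀ k, k ≠ i → a (fZ n k) = V (fZ n k) := fun k hk => hV _ <| by
    simp only [genZI, Finset.mem_insert, Finset.mem_image, Finset.mem_erase]
    exact Or.inr (Or.inr ⟨k, ⟨hk, Finset.mem_univ k⟩, rfl⟩)
  have h0 := map_sum_fZ n a
  have hs : ∑ k ∈ Finset.univ.erase i, a (fZ n k) = ∑ k ∈ Finset.univ.erase i, V (fZ n k) :=
    Finset.sum_congr rfl fun k hk => hf k (Finset.ne_of_mem_erase hk)
  rw [← Finset.add_sum_erase _ _ (Finset.mem_univ i), hs] at h0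
  have h1 := Finset.add_sum_erase Finset.univ (fun k => V (fZ n k)) (Finset.mem_univ i)
  have hi : a (fZ n i) = V (fZ n i) - ∑ k, V (fZ n k) := by linarith
  refine ⟨he, hf, hi, ?_⟩
  rw [← hg, map_gZ, map_hZ, he, hi]
  ring

/-- The values of a functional with prescribed values on `G(σ_{ij})`, and the condition that the
linear relation among the generators of `σ_{ij}` imposes on the prescription. -/
lemma value_IJ (n : ℕ) (u : ℤ) (i j : Fin n) (hij : i ≠ j) (a : (Fin n → ℤ) →ₗ[ℤ] ℤ)
    (V : (Fin n → ℤ) → ℤ) (hV : ∀ v ∈ genZIJ n u i j, a v = V v) :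
    a (eZ n) = -V (hZ n) ∧ (∀ k, k ≠ i → k ≠ j → a (fZ n k) = V (fZ n k)) ∧
      a (fZ n i) = coefZ n u i * V (hZ n) - V (gZ n u i) ∧
      a (fZ n j) = coefZ n u j * V (hZ n) - V (gZ n u j) ∧
      V (gZ n u i) + V (gZ n u j) = (coefZ n u i + coefZ n u j) * V (hZ n) +
        ∑ k, V (fZ n k) - V (fZ n i) - V (fZ n j) := by
  have hh : a (hZ n) = V (hZ n) := hV _ (by simp [genZIJ])
  have hgi : a (gZ n u i) = V (gZ n u i) := hV _ (by simp [genZIJ])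
  have hgj : a (gZ n u j) = V (gZ n u j) := hV _ (by simp [genZIJ])
  have hf : ∀ k, k ≠ i → k ≠ j → a (fZ n k) = V (fZ n k) := fun k hki hkj => hV _ <| by
    simp only [genZIJ, Finset.mem_insert, Finset.mem_image, Finset.mem_erase]
    exact Or.inr (Or.inr (Or.inr ⟨k, ⟨hkj, hki, Finset.mem_univ k⟩, rfl⟩))
  have hj : j ∈ Finset.univ.erase i := Finset.mem_erase.2 ⟨hij.symm, Finset.mem_univ j⟩
  have h0 := map_sum_fZ n a
  have hs : ∑ k ∈ (Finset.univ.erase i).erase j, a (fZ n k) =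
      ∑ k ∈ (Finset.univ.erase i).erase j, V (fZ n k) :=
    Finset.sum_congr rfl fun k hk =>
      hf k (Finset.ne_of_mem_erase (Finset.mem_of_mem_erase hk)) (Finset.ne_of_mem_erase hk)
  rw [← Finset.add_sum_erase _ _ (Finset.mem_univ i), ← Finset.add_sum_erase _ _ hj, hs] at h0
  have h1 := Finset.add_sum_erase Finset.univ (fun k => V (fZ n k)) (Finset.mem_univ i)
  have h2 := Finset.add_sum_erase (Finset.univ.erase i) (fun k => V (fZ n k)) hj
  have hi' := map_gZ n u a i
  have hj' := map_gZ n u a j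
  rw [hgi, hh] at hi'
  rw [hgj, hh] at hj'
  refine ⟨by linarith [map_hZ n a], hf, by linarith, by linarith, by linarith⟩

theorem stmt_12 (n : ℕ) (hn : 3 ≤ n) (u : ℤ) (hu : 2 ≤ u)
    (m : Finset (Fin n → ℤ) → ((Fin n → ℤ) →ₗ[ℤ] ℤ))
    (hcompat : ∀ s ∈ gensZ n u, ∀ t ∈ gensZ n u, ∀ v : Fin n → ℤ,
      v ∈ s → v ∈ t → m s v = m t v) :
    ∃ mm : (Fin n → ℤ) →ₗ[ℤ] ℤ, ∀ s ∈ gensZ n u, m s = mm := by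
  obtain ⟨V, hV⟩ : ∃ V : (Fin n → ℤ) → ℤ, ∀ s ∈ gensZ n u, ∀ v ∈ s, m s v = V v := by
    classical
    refine ⟨fun v => if h : ∃ t ∈ gensZ n u, v ∈ t then m h.choose v else 0, fun s hs v hv => ?_⟩
    have h : ∃ t ∈ gensZ n u, v ∈ t := ⟨s, hs, hv⟩
    simp only [dif_pos h]
    exact hcompat s hs _ h.choose_spec.1 v hv h.choose_spec.2
  have memI : ∀ i, genZI n u i ∈ gensZ n u := fun i => Or.inl ⟨i, rfl⟩
  have memIJ : ∀ i j, i ≠ j → genZIJ n u i j ∈ gensZ n u := fun i j h => Or.inr ⟨i, j, h, rfl⟩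
  have hI := fun i => value_I n u i _ V (hV _ (memI i))
  have hIJ := fun i j h => value_IJ n u i j h _ V (hV _ (memIJ i j h))
  have hg := fun i => (hI i).2.2.2
  have key : ∀ i j, i ≠ j →
      (coefZ n u i + coefZ n u j) * (V (hZ n) + V (eZ n)) = ∑ k, V (fZ n k) := fun i j h => by
    linear_combination hg i + hg j - (hIJ i j h).2.2.2.2
  let i₀ : Fin n := ⟨0, by omega⟩
  let i₁ : Fin n := ⟨1, by omega⟩
  let l : Fin n := ⟨n - 1, by omega⟩
  have c0 : coefZ n u i₀ = 1 := if_pos (show 0 < n - 1 by omega)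
  have c1 : coefZ n u i₁ = 1 := if_pos (show 1 < n - 1 by omega)
  have cl : coefZ n u l = u := if_neg (lt_irrefl (n - 1))
  have k1 := key i₀ i₁ (by simp [i₀, i₁])
  have k2 := key i₀ l (by simp only [i₀, l, ne_eq, Fin.mk.injEq]; omega)
  rw [c0, c1] at k1
  rw [c0, cl] at k2
  have hhe : V (hZ n) + V (eZ n) = 0 := by
    have : (u - 1) * (V (hZ n) + V (eZ n)) = 0 := by linear_combination k2 - k1
    exact (mul_eq_zero.1 this).resolve_left (by omega)
  have hS : ∑ k, V (fZ n k) = 0 := by rw [← k1, hhe, mul_zero]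
  have all : ∀ s ∈ gensZ n u, m s (eZ n) = V (eZ n) ∧ ∀ k, m s (fZ n k) = V (fZ n k) := by
    rintro s (⟨i, rfl⟩ | ⟨i, j, hij, rfl⟩)
    · obtain ⟨he, hf, hi, -⟩ := hI i
      refine ⟨he, fun k => ?_⟩
      by_cases hk : k = i
      · rw [hk, hi, hS, sub_zero]
      · exact hf k hk
    · obtain ⟨he, hf, hi, hj, -⟩ := hIJ i j hij
      refine ⟨by linarith, fun k => ?_⟩
      by_cases hki : k = i
      · rw [hki, hi]
        linear_combination coefZ n u i * hhe - hg i - hS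
      by_cases hkj : k = j
      · rw [hkj, hj]
        linear_combination coefZ n u j * hhe - hg j - hS
      exact hf k hki hkj
  refine ⟨m (genZI n u i₀), fun s hs => ext_eZ_fZ n _ _ ?_ fun k => ?_⟩
  · rw [(all s hs).1, (all _ (memI i₀)).1]
  · rw [(all s hs).2, (all _ (memI i₀)).2]
end

section
/- Fix integers n ≥ 3 and u ≥ 1 and the cones σᵢ (1 ≤ i ≤ n) of Δ_u. Let π : ℝⁿ → ℝ^{n−1} be the linear projection forgetting the last coordinate. Then for each 1 ≤ i ≤ n, the image π(σᵢ) equals the polyhedral cone in ℝ^{n−1} generated by {π(f_k) : 1 ≤ k ≤ n, k ≠ i}; explicitly, with v_k = e_k ∈ ℝ^{n−1} for k < n and vₙ = −(e₁ + ⋯ + e_{n−1}) ∈ ℝ^{n−1}, one has π(σᵢ) = cone({v_k : k ≠ i}), so the images π(σ₁),…,π(σₙ) are the n maximal cones of the standard fan of projective (n−1)-space. -/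
/-!
`coneOf s` is the `ℝ≥0`-span of `s`, so linear maps send it to the `ℝ≥0`-span of the image of `s`
(`coneOf_eq_span`). Under the projection `π` the generators of `σᵢ` become `π e = 0`,
`π f_k = v_k` and `π gᵢ = -vᵢ`, and since `∑ k, v_k = 0` (`sum_vVec`) the last one equals
`∑ k ≠ i, v_k`. Hence the images of `e` and `gᵢ` are redundant generators.
-/

open Pointwise

/-- The projection `π : ℝⁿ → ℝ^{n−1}` forgetting the last coordinate. -/
def projLast (n : ℕ) : V n → V (n - 1) :=
  fun x j => x (Fin.castLE (Nat.sub_le n 1) j)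

/-- The vectors `v_k` of the standard fan of `ℙ^{n−1}`: `v_k = e_k` for `k < n`
and `vₙ = −(e₁ + ⋯ + e_{n−1})`. -/
def vVec (n : ℕ) (k : Fin n) : V (n - 1) :=
  if (k : ℕ) < n - 1 then (fun j => if (j : ℕ) = (k : ℕ) then 1 else 0)
  else fun _ => -1

open scoped NNReal

theorem coneOf_eq_span {n : ℕ} (s : Finset (V n)) :
    coneOf s = (Submodule.span ℝ≥0 (s : Set (V n)) : Set (V n)) := by
  ext x
  constructor
  · rintro ⟨c, hc, rfl⟩
    refine Submodule.sum_mem _ fun v hv => ?_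
    exact Submodule.smul_mem _ (⟨c v, hc v⟩ : ℝ≥0) (Submodule.subset_span hv)
  · intro hx
    obtain ⟨f, -, rfl⟩ := Submodule.mem_span_finset.1 hx
    exact ⟨fun v => f v, fun v => (f v).2, rfl⟩

/-- The projection `projLast`, as an `ℝ≥0`-linear map. -/
def projLastLin (n : ℕ) : V n →ₗ[ℝ≥0] V (n - 1) where
  toFun := projLast n
  map_add' _ _ := rfl
  map_smul' _ _ := rfl

theorem projLast_eVec (n : ℕ) : projLast n (eVec n) = 0 := by
  funext j
  have := j.2
  simp [projLast, eVec, this.ne]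

theorem projLast_fVec (n : ℕ) (k : Fin n) : projLast n (fVec n k) = vVec n k := by
  funext j
  have := j.2
  by_cases hk : (k : ℕ) < n - 1
  · simp [projLast, fVec, vVec, hk, Pi.single_apply, Fin.ext_iff]
  · simp [projLast, fVec, vVec, hk, this.ne]

theorem projLast_gVec (n : ℕ) (u : ℤ) (i : Fin n) : projLast n (gVec n u i) = -vVec n i := by
  rw [← projLast_fVec]
  funext j
  have he := congrFun (projLast_eVec n) j
  simp only [projLast, Pi.zero_apply] at he
  by_cases hi : (i : ℕ) < n - 1 <;> simp [projLast, gVec, hVec, hi, he]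

theorem sum_vVec (n : ℕ) (hn : n ≠ 0) : ∑ k, vVec n k = 0 := by
  obtain ⟨m, rfl⟩ := Nat.exists_eq_succ_of_ne_zero hn
  funext j
  -- Coordinate `j` receives `1` from `v_j`, `-1` from the last vector, and `0` from the others.
  have h : ∀ k : Fin m, vVec (m + 1) k.castSucc j = if j = k then 1 else 0 := by
    intro k
    simp [vVec, Fin.ext_iff]
  rw [Finset.sum_apply, Fin.sum_univ_castSucc, Finset.sum_congr rfl fun k _ => h k,
    Finset.sum_ite_eq]
  simp [vVec]

/-!
STATEMENT 14: For `n ≥ 3`, `u ≥ 1` and each `i`, the image of `σᵢ` under the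
projection `π` forgetting the last coordinate is the cone in `ℝ^{n−1}`
generated by `{v_k : k ≠ i}`; these are the `n` maximal cones of the standard
fan of projective `(n−1)`-space.
-/

theorem stmt_14 (n : ℕ) (hn : 3 ≤ n) (u : ℤ) (hu : 1 ≤ u) :
    ∀ i : Fin n,
      projLast n '' (sigmaI n u i)
        = coneOf ((Finset.univ.erase i).image (vVec n)) := by
  intro i
  set S := Submodule.span ℝ≥0 (((Finset.univ.erase i).image (vVec n) : Finset _) : Set (V (n - 1)))
    with hS
  have hg : -vVec n i ∈ S := by
    have h := Finset.add_sum_erase Finset.univ (vVec n) (Finset.mem_univ i)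
    rw [sum_vVec n (by omega)] at h
    rw [neg_eq_of_add_eq_zero_right h]
    exact Submodule.sum_mem _ fun k hk =>
      Submodule.subset_span (Finset.mem_coe.2 (Finset.mem_image_of_mem _ hk))
  have himg : projLast n '' (genI n u i : Set (V n)) =
      insert 0 (insert (-vVec n i)
        (((Finset.univ.erase i).image (vVec n) : Finset _) : Set (V (n - 1)))) := by
    rw [genI, Finset.coe_insert, Finset.coe_insert, Set.image_insert_eq, Set.image_insert_eq,
      projLast_eVec, projLast_gVec, Finset.coe_image, Finset.coe_image, Set.image_image]
    simp only [projLast_fVec]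
  have hmap : projLast n '' (Submodule.span ℝ≥0 (genI n u i : Set (V n)) : Set (V n)) =
      (Submodule.span ℝ≥0 (projLast n '' (genI n u i : Set (V n))) : Set (V (n - 1))) :=
    congrArg SetLike.coe (Submodule.map_span (projLastLin n) (genI n u i : Set (V n)))
  rw [sigmaI, coneOf_eq_span, coneOf_eq_span, hmap, himg, Submodule.span_insert_zero,
    Submodule.span_insert_eq_span hg]
end
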